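/- Under the same assumptions, the scheme is an ℓ^∞-contraction: sup_{i,j} |W^j_i - V^j_i| ≤ sup_i |W^0_i - V^0_i| for nondecreasing initial data V^0, W^0 bounded by M. -/

import Mathlib

open Real

noncomputable def discFL (ω φ : ℤ → ℝ) (i : ℤ) : ℝ :=
  ∑' k : {k : ℤ // k ≠ 0}, (φ i - φ (i + k)) * ω k

noncomputable def Dh (h : ℝ) (ω φ : ℤ → ℝ) (i : ℤ) : ℝ :=
  if discFL ω φ i ≤ 0 then (φ (i + 1) - φ i) / h else (φ i - φ (i - 1)) / h

noncomputable def Lh (h m : ℝ) (ω φ : ℤ → ℝ) (i : ℤ) : ℝ :=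
  -|Dh h ω φ i| ^ (m - 1) * discFL ω φ i

noncomputable def Sstep (τ h m : ℝ) (ω φ : ℤ → ℝ) (i : ℤ) : ℝ :=
  φ i - τ * |Dh h ω φ i| ^ (m - 1) * discFL ω φ i

/-!
On nondecreasing grid functions the difference quotient `Dh` is nonnegative, and the upwind choice
makes an increase of the data at other grid points only raise the updated value at `i`. An increase
by `d` at `i` itself costs at most `τ * m * (K / h) ^ (m - 1) * (∑ ω) * d`, which the CFL condition
bounds by `d`; so the step is order preserving. It also commutes with adding constants and with
translations of the grid. Comparing `φ` with its own translates shows that monotonicity and the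
oscillation bound `K` propagate in time; comparing `W` with `V ± C` gives the contraction.
-/

theorem rpow_sub_rpow_le {p x y : ℝ} (hp : 1 ≤ p) (hx : 0 ≤ x) (hxy : x ≤ y) :
    y ^ p - x ^ p ≤ p * y ^ (p - 1) * (y - x) := by
  rcases hxy.eq_or_lt with rfl | hlt
  · simp
  · have hslope := (convexOn_rpow hp).slope_le_of_hasDerivAt hx (hx.trans hxy) hlt
      (Real.hasDerivAt_rpow_const (Or.inr hp))
    rwa [slope_def_field, div_le_iff₀ (sub_pos.2 hlt)] at hslope

theorem rpow_mul_sub_rpow_mul_le_of_nonneg {p R E x y a b : ℝ} (hp : 1 ≤ p) (hx : 0 ≤ x)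
    (hxR : x ≤ R) (hy : 0 ≤ y) (hyR : y ≤ R) (hE : 0 ≤ E) (hb : 0 ≤ b) (hab : b - a ≤ E)
    (hxy : (y - x) * b ≤ R * E) :
    y ^ p * b - x ^ p * a ≤ (p + 1) * R ^ p * E := by
  have hR : 0 ≤ R := hx.trans hxR
  have hfactor : x ^ p * (b - a) ≤ R ^ p * E :=
    calc x ^ p * (b - a) ≤ x ^ p * E := by gcongr
      _ ≤ R ^ p * E := by gcongr
  have hpower : (y ^ p - x ^ p) * b ≤ p * R ^ p * E := by
    rcases le_total y x with hyx | hxy'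
    · have hyx_pow : y ^ p ≤ x ^ p := by gcongr
      exact (mul_nonpos_of_nonpos_of_nonneg (sub_nonpos.2 hyx_pow) hb).trans (by positivity)
    · calc (y ^ p - x ^ p) * b ≤ p * y ^ (p - 1) * (y - x) * b := by
            gcongr; exact rpow_sub_rpow_le hp hx hxy'
        _ = p * y ^ (p - 1) * ((y - x) * b) := by ring
        _ ≤ p * R ^ (p - 1) * (R * E) := by gcongr
        _ = p * R ^ (p - 1 + 1) * E := by
            rw [Real.rpow_add_one' hR (by linarith)]; ring
        _ = p * R ^ p * E := by rw [sub_add_cancel]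
  linarith

theorem rpow_mul_sub_rpow_mul_le_of_nonpos_of_nonneg {p R x y a b : ℝ} (hp : 0 ≤ p)
    (hx : 0 ≤ x) (hxR : x ≤ R) (hy : 0 ≤ y) (hyR : y ≤ R) (ha : a ≤ 0) (hb : 0 ≤ b) :
    y ^ p * b - x ^ p * a ≤ R ^ p * (b - a) := by
  have hyb : y ^ p * b ≤ R ^ p * b := by gcongr
  have hxa : x ^ p * -a ≤ R ^ p * -a := by gcongr; exact neg_nonneg.2 ha
  linarith

theorem rpow_mul_sub_rpow_mul_le {p R E x y a b : ℝ} (hp : 1 ≤ p) (hx : 0 ≤ x) (hxR : x ≤ R)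
    (hy : 0 ≤ y) (hyR : y ≤ R) (hE : 0 ≤ E) (hab : b - a ≤ E)
    (hnonpos : a ≤ 0 → b ≤ 0 → (x - y) * -a ≤ R * E)
    (hpos : 0 < a → 0 < b → (y - x) * b ≤ R * E) :
    y ^ p * b - x ^ p * a ≤ (p + 1) * R ^ p * E := by
  have hR : 0 ≤ R := hx.trans hxR
  rcases le_or_gt a 0 with ha | ha <;> rcases le_or_gt b 0 with hb | hb
  · have := rpow_mul_sub_rpow_mul_le_of_nonneg (a := -b) hp hy hyR hx hxR hE
      (neg_nonneg.2 ha) (by linarith) (hnonpos ha hb)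
    linarith
  · calc y ^ p * b - x ^ p * a ≤ R ^ p * (b - a) :=
          rpow_mul_sub_rpow_mul_le_of_nonpos_of_nonneg (by linarith) hx hxR hy hyR ha hb.le
      _ ≤ 1 * R ^ p * E := by rw [one_mul]; gcongr
      _ ≤ (p + 1) * R ^ p * E := by gcongr; linarith
  · have hyb : y ^ p * b ≤ 0 := mul_nonpos_of_nonneg_of_nonpos (by positivity) hb
    have hxa : 0 ≤ x ^ p * a := by positivity
    exact (sub_nonpos.2 (hyb.trans hxa)).trans (by positivity)
  · exact rpow_mul_sub_rpow_mul_le_of_nonneg hp hx hxR hy hyR hE hb.le hab (hpos ha hb)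

/-- Weights of a nonlocal difference operator: nonnegative and summable away from `0`. The value
`ω 0` is unconstrained, since `discFL` never sees it. -/
structure IsKernel (ω : ℤ → ℝ) : Prop where
  nonneg : ∀ k ≠ 0, 0 ≤ ω k
  summable : Summable fun k : {k : ℤ // k ≠ 0} => ω k

/-- The total mass of the weights away from `0`. -/
noncomputable def kernelMass (ω : ℤ → ℝ) : ℝ := ∑' k : {k : ℤ // k ≠ 0}, ω k

/-- Nondecreasing grid functions of oscillation at most `K`, the class of data on which the scheme
is monotone. -/
structure IsMonotoneOsc (K : ℝ) (φ : ℤ → ℝ) : Prop where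
  monotone : Monotone φ
  sub_le : ∀ i j, φ i - φ j ≤ K

/-- The CFL condition of the scheme for data of oscillation at most `K`: the time step times
the one-sided Lipschitz constant of `-Lh` from `Lh_sub_Lh_le` is at most `1`. -/
def CFLCondition (τ h m K : ℝ) (ω : ℤ → ℝ) : Prop :=
  τ * (m * (K / h) ^ (m - 1) * kernelMass ω) ≤ 1

section discFL

variable {K : ℝ} {ω φ ψ : ℤ → ℝ}

theorem IsKernel.kernelMass_nonneg (hω : IsKernel ω) : 0 ≤ kernelMass ω :=
  tsum_nonneg fun k => hω.nonneg k k.2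

theorem IsKernel.norm_sub_mul_le (hω : IsKernel ω) (hφ : ∀ i j, φ i - φ j ≤ K) (i : ℤ)
    (k : {k : ℤ // k ≠ 0}) : ‖(φ i - φ (i + k)) * ω k‖ ≤ K * ω k := by
  rw [norm_mul, Real.norm_of_nonneg (hω.nonneg k k.2)]
  exact mul_le_mul_of_nonneg_right (abs_sub_le_iff.2 ⟨hφ _ _, hφ _ _⟩) (hω.nonneg k k.2)

theorem IsKernel.summable_sub_mul (hω : IsKernel ω) (hφ : ∀ i j, φ i - φ j ≤ K) (i : ℤ) :
    Summable fun k : {k : ℤ // k ≠ 0} => (φ i - φ (i + k)) * ω k :=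
  (hω.summable.mul_left K).of_norm_bounded (hω.norm_sub_mul_le hφ i)

theorem abs_discFL_le (hω : IsKernel ω) (hφ : ∀ i j, φ i - φ j ≤ K) (i : ℤ) :
    |discFL ω φ i| ≤ K * kernelMass ω :=
  tsum_of_norm_bounded (hω.summable.hasSum.mul_left K) (hω.norm_sub_mul_le hφ i)

theorem discFL_sub_discFL_le {L : ℝ} (hω : IsKernel ω) (hφ : ∀ i j, φ i - φ j ≤ K)
    (hψ : ∀ i j, ψ i - ψ j ≤ L) (hle : φ ≤ ψ) (i : ℤ) :
    discFL ω ψ i - discFL ω φ i ≤ (ψ i - φ i) * kernelMass ω := by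
  have hsφ := hω.summable_sub_mul hφ i
  have hsψ := hω.summable_sub_mul hψ i
  rw [discFL, discFL, kernelMass, ← hsψ.tsum_sub hsφ, ← tsum_mul_left]
  refine (hsψ.sub hsφ).tsum_le_tsum (fun k => ?_) (hω.summable.mul_left _)
  rw [← sub_mul]
  exact mul_le_mul_of_nonneg_right (by linarith [hle (i + k)]) (hω.nonneg k k.2)

end discFL

section Dh

variable {h K : ℝ} {ω φ ψ : ℤ → ℝ} {i : ℤ}

theorem IsMonotoneOsc.Dh_nonneg (hφ : IsMonotoneOsc K φ) (hh : 0 ≤ h) : 0 ≤ Dh h ω φ i := by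
  unfold Dh
  split_ifs <;> exact div_nonneg (sub_nonneg.2 (hφ.monotone (by lia))) hh

theorem IsMonotoneOsc.Dh_le (hφ : IsMonotoneOsc K φ) (hh : 0 ≤ h) : Dh h ω φ i ≤ K / h := by
  unfold Dh
  split_ifs <;> exact div_le_div_of_nonneg_right (hφ.sub_le _ _) hh

theorem Dh_sub_Dh_le_of_nonpos (hh : 0 ≤ h) (hle : φ ≤ ψ) (hφ : discFL ω φ i ≤ 0)
    (hψ : discFL ω ψ i ≤ 0) : Dh h ω φ i - Dh h ω ψ i ≤ (ψ i - φ i) / h := by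
  rw [Dh, Dh, if_pos hφ, if_pos hψ, ← sub_div]
  exact div_le_div_of_nonneg_right (by linarith [hle (i + 1)]) hh

theorem Dh_sub_Dh_le_of_pos (hh : 0 ≤ h) (hle : φ ≤ ψ) (hφ : 0 < discFL ω φ i)
    (hψ : 0 < discFL ω ψ i) : Dh h ω ψ i - Dh h ω φ i ≤ (ψ i - φ i) / h := by
  rw [Dh, Dh, if_neg hφ.not_ge, if_neg hψ.not_ge, ← sub_div]
  exact div_le_div_of_nonneg_right (by linarith [hle (i - 1)]) hh

end Dh

section Comparison

variable {τ h m K : ℝ} {ω φ ψ : ℤ → ℝ}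

theorem Lh_sub_Lh_le (hm : 2 ≤ m) (hh : 0 ≤ h) (hω : IsKernel ω) (hφ : IsMonotoneOsc K φ)
    (hψ : IsMonotoneOsc K ψ) (hle : φ ≤ ψ) (i : ℤ) :
    Lh h m ω φ i - Lh h m ω ψ i ≤ m * (K / h) ^ (m - 1) * ((ψ i - φ i) * kernelMass ω) := by
  have hd : 0 ≤ ψ i - φ i := sub_nonneg.2 (hle i)
  have hE : 0 ≤ (ψ i - φ i) * kernelMass ω := mul_nonneg hd hω.kernelMass_nonneg
  have hprod {z F : ℝ} (hz : z ≤ (ψ i - φ i) / h) (hF : 0 ≤ F) (hFK : F ≤ K * kernelMass ω) :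
      z * F ≤ K / h * ((ψ i - φ i) * kernelMass ω) :=
    calc z * F ≤ (ψ i - φ i) / h * (K * kernelMass ω) := by gcongr
      _ = K / h * ((ψ i - φ i) * kernelMass ω) := by ring
  have hflux : Dh h ω ψ i ^ (m - 1) * discFL ω ψ i - Dh h ω φ i ^ (m - 1) * discFL ω φ i ≤
      (m - 1 + 1) * (K / h) ^ (m - 1) * ((ψ i - φ i) * kernelMass ω) := by
    refine rpow_mul_sub_rpow_mul_le (by linarith) (hφ.Dh_nonneg hh) (hφ.Dh_le hh)
      (hψ.Dh_nonneg hh) (hψ.Dh_le hh) hE (discFL_sub_discFL_le hω hφ.sub_le hψ.sub_le hle i)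
      (fun hφ₀ hψ₀ => ?_) (fun hφ₀ hψ₀ => ?_)
    · exact hprod (Dh_sub_Dh_le_of_nonpos hh hle hφ₀ hψ₀) (neg_nonneg.2 hφ₀)
        ((neg_le_abs _).trans (abs_discFL_le hω hφ.sub_le i))
    · exact hprod (Dh_sub_Dh_le_of_pos hh hle hφ₀ hψ₀) hψ₀.le
        ((le_abs_self _).trans (abs_discFL_le hω hψ.sub_le i))
  rw [sub_add_cancel] at hflux
  rw [Lh, Lh, abs_of_nonneg (hφ.Dh_nonneg hh), abs_of_nonneg (hψ.Dh_nonneg hh)]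
  linarith

theorem Sstep_eq_add_mul_Lh (τ h m : ℝ) (ω φ : ℤ → ℝ) (i : ℤ) :
    Sstep τ h m ω φ i = φ i + τ * Lh h m ω φ i := by
  rw [Sstep, Lh]
  ring

theorem Sstep_le_Sstep (hm : 2 ≤ m) (hh : 0 ≤ h) (hτ : 0 ≤ τ) (hω : IsKernel ω)
    (hcfl : CFLCondition τ h m K ω) (hφ : IsMonotoneOsc K φ) (hψ : IsMonotoneOsc K ψ)
    (hle : φ ≤ ψ) : Sstep τ h m ω φ ≤ Sstep τ h m ω ψ := by
  intro i
  have hdecrease : τ * (Lh h m ω φ i - Lh h m ω ψ i) ≤ ψ i - φ i :=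
    calc τ * (Lh h m ω φ i - Lh h m ω ψ i)
        ≤ τ * (m * (K / h) ^ (m - 1) * ((ψ i - φ i) * kernelMass ω)) := by
          gcongr; exact Lh_sub_Lh_le hm hh hω hφ hψ hle i
      _ = τ * (m * (K / h) ^ (m - 1) * kernelMass ω) * (ψ i - φ i) := by ring
      _ ≤ ψ i - φ i := mul_le_of_le_one_left (sub_nonneg.2 (hle i)) hcfl
  rw [Sstep_eq_add_mul_Lh, Sstep_eq_add_mul_Lh]
  linarith

end Comparison

section Equivariance

variable (τ h m : ℝ) (ω φ : ℤ → ℝ)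

theorem Sstep_add_const (c : ℝ) (i : ℤ) :
    Sstep τ h m ω (fun j => φ j + c) i = Sstep τ h m ω φ i + c := by
  simp only [Sstep, Dh, discFL, add_sub_add_right_eq_sub]
  exact add_sub_right_comm _ _ _

theorem discFL_comp_add_right (n i : ℤ) :
    discFL ω (fun j => φ (j + n)) i = discFL ω φ (i + n) := by
  simp only [discFL, add_right_comm]

theorem Sstep_comp_add_right (n i : ℤ) :
    Sstep τ h m ω (fun j => φ (j + n)) i = Sstep τ h m ω φ (i + n) := by
  simp only [Sstep, Dh, discFL_comp_add_right, add_right_comm, sub_add_eq_add_sub]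

end Equivariance

namespace IsMonotoneOsc

variable {K : ℝ} {φ : ℤ → ℝ}

theorem of_abs_le {M : ℝ} (hmono : Monotone φ) (hbd : ∀ i, |φ i| ≤ M) :
    IsMonotoneOsc (2 * M) φ where
  monotone := hmono
  sub_le i j := by linarith [(abs_le.1 (hbd i)).2, (abs_le.1 (hbd j)).1]

theorem add_const (hφ : IsMonotoneOsc K φ) (c : ℝ) : IsMonotoneOsc K fun i => φ i + c where
  monotone := hφ.monotone.add_const c
  sub_le i j := by simpa only [add_sub_add_right_eq_sub] using hφ.sub_le i j

theorem comp_add_right (hφ : IsMonotoneOsc K φ) (n : ℤ) : IsMonotoneOsc K fun i => φ (i + n) where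
  monotone := hφ.monotone.comp (monotone_id.add_const n)
  sub_le _ _ := hφ.sub_le _ _

end IsMonotoneOsc

section Invariance

variable {τ h m K : ℝ} {ω φ ψ : ℤ → ℝ}

theorem Sstep_le_Sstep_add_const (hm : 2 ≤ m) (hh : 0 ≤ h) (hτ : 0 ≤ τ) (hω : IsKernel ω)
    (hcfl : CFLCondition τ h m K ω) (hφ : IsMonotoneOsc K φ) (hψ : IsMonotoneOsc K ψ) {c : ℝ}
    (hle : ∀ i, φ i ≤ ψ i + c) (i : ℤ) : Sstep τ h m ω φ i ≤ Sstep τ h m ω ψ i + c := by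
  rw [← Sstep_add_const]
  exact Sstep_le_Sstep hm hh hτ hω hcfl hφ (hψ.add_const c) hle i

theorem abs_Sstep_sub_Sstep_le (hm : 2 ≤ m) (hh : 0 ≤ h) (hτ : 0 ≤ τ) (hω : IsKernel ω)
    (hcfl : CFLCondition τ h m K ω) (hφ : IsMonotoneOsc K φ) (hψ : IsMonotoneOsc K ψ) {C : ℝ}
    (hC : ∀ i, |φ i - ψ i| ≤ C) (i : ℤ) : |Sstep τ h m ω φ i - Sstep τ h m ω ψ i| ≤ C := by
  simp only [abs_sub_le_iff, sub_le_iff_le_add'] at hC ⊢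
  exact ⟨Sstep_le_Sstep_add_const hm hh hτ hω hcfl hφ hψ (fun k => (hC k).1) i,
    Sstep_le_Sstep_add_const hm hh hτ hω hcfl hψ hφ (fun k => (hC k).2) i⟩

theorem isMonotoneOsc_Sstep (hm : 2 ≤ m) (hh : 0 ≤ h) (hτ : 0 ≤ τ) (hω : IsKernel ω)
    (hcfl : CFLCondition τ h m K ω) (hφ : IsMonotoneOsc K φ) :
    IsMonotoneOsc K (Sstep τ h m ω φ) := by
  have htranslate {c : ℝ} (i n : ℤ) (hle : ∀ k, φ k ≤ φ (k + n) + c) :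
      Sstep τ h m ω φ i ≤ Sstep τ h m ω φ (i + n) + c := by
    rw [← Sstep_comp_add_right]
    exact Sstep_le_Sstep_add_const hm hh hτ hω hcfl hφ (hφ.comp_add_right n) hle i
  refine ⟨monotone_int_of_le_succ fun i => ?_, fun i j => ?_⟩
  · simpa using htranslate (c := 0) i 1 fun k => by simpa using hφ.monotone (Int.le_add_one le_rfl)
  · simpa [sub_le_iff_le_add, add_comm K] using
      htranslate i (j - i) fun k => sub_le_iff_le_add'.1 (hφ.sub_le k _)

theorem isMonotoneOsc_iterate {V : ℕ → ℤ → ℝ} (hm : 2 ≤ m) (hh : 0 ≤ h) (hτ : 0 ≤ τ)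
    (hω : IsKernel ω) (hcfl : CFLCondition τ h m K ω)
    (hV0 : IsMonotoneOsc K (V 0)) (hiterV : ∀ j i, V (j + 1) i = Sstep τ h m ω (V j) i)
    (j : ℕ) : IsMonotoneOsc K (V j) := by
  induction j with
  | zero => exact hV0
  | succ j ih =>
    rw [funext (hiterV j)]
    exact isMonotoneOsc_Sstep hm hh hτ hω hcfl ih

end Invariance

theorem cflCondition_of_le {s m M h τ Cs : ℝ} {ω : ℤ → ℝ} (hm : 0 < m) (hM : 0 < M) (hh : 0 < h)
    (hτ : 0 ≤ τ) (hCs : 0 < Cs) (hmass : kernelMass ω ≤ Cs * h ^ (-(2 * s)))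
    (hCFL : τ ≤ h ^ (2 * s + m - 1) / (Cs * m * (2 * M) ^ (m - 1))) :
    CFLCondition τ h m (2 * M) ω := by
  have hpow : h ^ (2 * s + m - 1) = h ^ (2 * s) * h ^ (m - 1) := by
    rw [← Real.rpow_add hh, add_sub_assoc]
  rw [hpow, le_div_iff₀ (by positivity)] at hCFL
  rw [Real.rpow_neg hh.le] at hmass
  rw [CFLCondition, Real.div_rpow (by positivity) hh.le]
  calc τ * (m * ((2 * M) ^ (m - 1) / h ^ (m - 1)) * kernelMass ω)
      ≤ τ * (m * ((2 * M) ^ (m - 1) / h ^ (m - 1)) * (Cs * (h ^ (2 * s))⁻¹)) := by gcongr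
    _ = τ * (Cs * m * (2 * M) ^ (m - 1)) / (h ^ (2 * s) * h ^ (m - 1)) := by field_simp
    _ ≤ 1 := by rwa [div_le_one (by positivity)]

theorem scheme_linfty_contraction_general {m h τ K C : ℝ} {ω : ℤ → ℝ} {V W : ℕ → ℤ → ℝ}
    (hm : 2 ≤ m) (hh : 0 < h) (hτ : 0 ≤ τ) (hω : IsKernel ω) (hcfl : CFLCondition τ h m K ω)
    (hV0 : IsMonotoneOsc K (V 0)) (hW0 : IsMonotoneOsc K (W 0))
    (hiterV : ∀ j i, V (j + 1) i = Sstep τ h m ω (V j) i)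
    (hiterW : ∀ j i, W (j + 1) i = Sstep τ h m ω (W j) i)
    (hC : ∀ i, |W 0 i - V 0 i| ≤ C) (j : ℕ) : ∀ i, |W j i - V j i| ≤ C := by
  induction j with
  | zero => exact hC
  | succ j ih =>
    have hV := isMonotoneOsc_iterate hm hh.le hτ hω hcfl hV0 hiterV j
    have hW := isMonotoneOsc_iterate hm hh.le hτ hω hcfl hW0 hiterW j
    simpa only [hiterV, hiterW] using abs_Sstep_sub_Sstep_le hm hh.le hτ hω hcfl hW hV ih

theorem scheme_linfty_contraction (s m M h τ Cs : ℝ) (ω : ℤ → ℝ) (V W : ℕ → ℤ → ℝ)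
    (hs : 0 < s) (hs1 : s < 1) (hm : 2 ≤ m) (hM : 0 < M) (hh : 0 < h) (hτ : 0 < τ)
    (hCs : 0 < Cs)
    (hωpos : ∀ k, 0 ≤ ω k) (hωsym : ∀ k, ω (-k) = ω k)
    (hωsum : Summable (fun k : {k : ℤ // k ≠ 0} => ω k))
    (hωbd : (∑' k : {k : ℤ // k ≠ 0}, ω k) ≤ Cs * h ^ (-(2 * s)))
    (hCFL : τ ≤ h ^ (2 * s + m - 1) / (Cs * m * (2 * M) ^ (m - 1)))
    (hV0mono : Monotone (V 0)) (hV0bd : ∀ i, |V 0 i| ≤ M)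
    (hW0mono : Monotone (W 0)) (hW0bd : ∀ i, |W 0 i| ≤ M)
    (hiterV : ∀ j i, V (j + 1) i = Sstep τ h m ω (V j) i)
    (hiterW : ∀ j i, W (j + 1) i = Sstep τ h m ω (W j) i) :
    ∀ C : ℝ, (∀ i, |W 0 i - V 0 i| ≤ C) → ∀ (j : ℕ) (i : ℤ), |W j i - V j i| ≤ C :=
  fun _ hC => scheme_linfty_contraction_general hm hh hτ.le ⟨fun k _ => hωpos k, hωsum⟩
    (cflCondition_of_le (by linarith) hM hh hτ.le hCs hωbd hCFL) (.of_abs_le hV0mono hV0bd)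
    (.of_abs_le hW0mono hW0bd) hiterV hiterW hC
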